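/- Let M be a compact positive linear operator on L¹(π) for a probability measure π, and let h ∈ L¹(π) satisfy h > 0 π-almost everywhere. Then lim_{n→∞} ‖Mⁿh‖^{1/n} = r(M), the spectral radius of M. -/

import Mathlib

open MeasureTheory Filter

/-- If `a` is submultiplicative and `a n ^ (1 / n) → r`, then `r ^ n ≤ a n` for `n ≥ 1`. -/
theorem pow_le_of_submultiplicative_of_tendsto_root {a : ℕ → ℝ} {r : ℝ} (ha : ∀ n, 0 ≤ a n)
    (hr0 : 0 ≤ r) (hpow : ∀ n k, k ≠ 0 → a (n * k) ≤ a n ^ k)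
    (hr : Tendsto (fun n : ℕ => a n ^ (1 / (n : ℝ))) atTop (nhds r)) {n : ℕ} (hn : n ≠ 0) :
    r ^ n ≤ a n := by
  have hmul : Tendsto (fun k : ℕ => n * k) atTop atTop :=
    tendsto_id.const_mul_atTop' (Nat.pos_of_ne_zero hn)
  have hroot : r ≤ a n ^ (1 / (n : ℝ)) := by
    refine le_of_tendsto (hr.comp hmul) ?_
    filter_upwards [eventually_ne_atTop 0] with k hk
    have hk' : (k : ℝ) ≠ 0 := Nat.cast_ne_zero.mpr hk
    calc a (n * k) ^ (1 / ((n * k : ℕ) : ℝ))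
        ≤ (a n ^ k) ^ (1 / ((n * k : ℕ) : ℝ)) :=
          Real.rpow_le_rpow (ha _) (hpow n k hk) (by positivity)
      _ = a n ^ (1 / (n : ℝ)) := by
          rw [← Real.rpow_natCast, ← Real.rpow_mul (ha n)]
          congr 1
          push_cast
          field_simp
  calc r ^ n ≤ (a n ^ (1 / (n : ℝ))) ^ n := pow_le_pow_left₀ hr0 hroot n
    _ = a n := by rw [one_div, Real.rpow_inv_natCast_pow (ha n) hn]

/-- A sequence growing like `r ^ n` cannot contract by the factor `r / 2 ^ p` throughout a window
of length at least `n / p`. -/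
theorem exists_window_contraction_lt {a : ℕ → ℝ} {r : ℝ} (hr0 : 0 < r)
    (hlow : ∀ n, n ≠ 0 → r ^ n ≤ a n) {n k p : ℕ} (hn : n ≠ 0) (hup : a n < (2 * r) ^ n)
    (hk : n ≤ p * k) :
    ∃ j < k, r / 2 ^ p * a (n + j) < a (n + j + 1) := by
  by_contra! hcon
  have hiter : ∀ j ≤ k, a (n + j) ≤ (r / 2 ^ p) ^ j * a n := by
    intro j
    induction j with
    | zero => simp
    | succ j ih =>
      intro hj
      calc a (n + (j + 1)) ≤ r / 2 ^ p * a (n + j) := hcon j hj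
        _ ≤ r / 2 ^ p * ((r / 2 ^ p) ^ j * a n) := by gcongr; exact ih (by omega)
        _ = _ := by ring
  have h1 : r ^ (n + k) < (r / 2 ^ p) ^ k * (2 * r) ^ n :=
    calc r ^ (n + k) ≤ a (n + k) := hlow _ (by omega)
      _ ≤ (r / 2 ^ p) ^ k * a n := hiter k le_rfl
      _ < _ := by gcongr
  have h2 : (r / 2 ^ p) ^ k * (2 * r) ^ n = r ^ (n + k) * (2 ^ n / 2 ^ (p * k)) := by
    rw [div_pow, mul_pow, ← pow_mul, pow_add]
    ring
  have h3 : (2 : ℝ) ^ n / 2 ^ (p * k) ≤ 1 :=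
    div_le_one_of_le₀ (pow_le_pow_right₀ one_le_two hk) (by positivity)
  rw [h2] at h1
  exact absurd h1 (not_lt.mpr (mul_le_of_le_one_right (by positivity) h3))

/-- Comparison of root growth rates: if `a (n + 1)` is bounded by a multiple of `b n` up to
an arbitrarily small multiple of `a n`, and `b` grows at most geometrically, then `b` has at least the
root growth rate of `a`. -/
theorem eventually_lt_root_of_le_add_mul {a b : ℕ → ℝ} {r m : ℝ} (hr0 : 0 < r) (hm0 : 0 < m)
    (hrm : r ≤ m) (hlow : ∀ n, n ≠ 0 → r ^ n ≤ a n)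
    (hbm : ∀ n, b (n + 1) ≤ m * b n)
    (hab : ∀ ε > 0, ∃ C > 0, ∀ n, a (n + 1) ≤ C * b n + ε * a n)
    (hr : Tendsto (fun n : ℕ => a n ^ (1 / (n : ℝ))) atTop (nhds r)) {s : ℝ} (hs : s < r) :
    ∀ᶠ n : ℕ in atTop, s < b n ^ (1 / (n : ℝ)) := by
  have hq0 : 0 < r / m := by positivity
  have hq1 : r / m ≤ 1 := div_le_one_of_le₀ hrm hm0.le
  obtain ⟨p, hp, hp0⟩ : ∃ p : ℕ, s < r * (r / m) ^ (1 / (p : ℝ)) ∧ p ≠ 0 := by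
    have hlim : Tendsto (fun p : ℕ => r * (r / m) ^ (1 / (p : ℝ))) atTop (nhds r) := by
      have := (tendsto_const_nhds (x := r / m)).rpow
        (tendsto_one_div_atTop_nhds_zero_nat (𝕜 := ℝ)) (Or.inl hq0.ne')
      simpa using this.const_mul r
    exact ((hlim.eventually_const_lt hs).and (eventually_ne_atTop 0)).exists
  obtain ⟨C, hC, hCab⟩ := hab (r / 2 ^ p / 2) (by positivity)
  set c : ℝ := r / 2 ^ p / 2 / C with hc
  have hc0 : 0 < c := by positivity
  have hbmul : ∀ n j, b (n + j) ≤ m ^ j * b n := by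
    intro n j
    induction j with
    | zero => simp
    | succ j ih =>
      calc b (n + (j + 1)) ≤ m * b (n + j) := hbm _
        _ ≤ m * (m ^ j * b n) := by gcongr
        _ = _ := by ring
  have hup : ∀ᶠ n : ℕ in atTop, a n < (2 * r) ^ n := by
    filter_upwards [hr.eventually_lt_const (show r < 2 * r by linarith),
      eventually_ne_atTop 0] with n hn hn0
    have han : 0 ≤ a n := (by positivity : (0 : ℝ) ≤ r ^ n).trans (hlow n hn0)
    calc a n = (a n ^ (1 / (n : ℝ))) ^ n := by
          rw [one_div, Real.rpow_inv_natCast_pow han hn0]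
      _ < (2 * r) ^ n := pow_lt_pow_left₀ hn (by positivity) hn0
  have hbound : ∀ᶠ n : ℕ in atTop, c * r ^ n * (r / m) ^ (n / p + 1) ≤ b n := by
    filter_upwards [hup, eventually_ne_atTop 0] with n hn hn0
    obtain ⟨j, hjk, hj⟩ := exists_window_contraction_lt hr0 hlow hn0 hn
      (k := n / p + 1) (p := p) (Nat.lt_mul_div_succ n (Nat.pos_of_ne_zero hp0)).le
    have h1 : r / 2 ^ p / 2 * a (n + j) ≤ C * b (n + j) := by
      have := hCab (n + j)
      linarith
    have h2 : c * r ^ (n + j) ≤ b (n + j) := by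
      rw [hc, div_mul_eq_mul_div, div_le_iff₀ hC, mul_comm (b _)]
      refine le_trans ?_ h1
      gcongr
      exact hlow _ (by omega)
    have h3 : c * r ^ n * (r / m) ^ j ≤ b n := by
      rw [div_pow, ← mul_div_assoc, div_le_iff₀ (by positivity), mul_comm (b n)]
      calc c * r ^ n * r ^ j = c * r ^ (n + j) := by ring
        _ ≤ _ := h2.trans (hbmul n j)
    refine le_trans ?_ h3
    exact mul_le_mul_of_nonneg_left (pow_le_pow_of_le_one hq0.le hq1 hjk.le) (by positivity)
  have hlim : Tendsto
      (fun n : ℕ => c ^ (1 / (n : ℝ)) * r * (r / m) ^ (1 / (p : ℝ) + 1 / (n : ℝ)))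
      atTop (nhds (r * (r / m) ^ (1 / (p : ℝ)))) := by
    have h0 := tendsto_one_div_atTop_nhds_zero_nat (𝕜 := ℝ)
    have h1 := (tendsto_const_nhds (x := c)).rpow h0 (Or.inl hc0.ne')
    have h2 := (tendsto_const_nhds (x := r / m)).rpow (h0.const_add (1 / (p : ℝ)))
      (Or.inl hq0.ne')
    simpa using (h1.mul_const r).mul h2
  filter_upwards [hlim.eventually_const_lt hp, hbound, eventually_ne_atTop 0] with n hn hbn hn0
  have hn0' : (0 : ℝ) < n := by positivity
  have hp0' : (0 : ℝ) < p := by positivity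
  refine hn.trans_le (le_trans ?_ (Real.rpow_le_rpow (by positivity) hbn (by positivity)))
  rw [Real.mul_rpow (by positivity) (by positivity), Real.mul_rpow (by positivity) (by positivity),
    one_div (n : ℝ), Real.pow_rpow_inv_natCast hr0.le hn0]
  refine mul_le_mul_of_nonneg_left ?_ (by positivity)
  rw [← Real.rpow_natCast, ← Real.rpow_mul hq0.le]
  refine Real.rpow_le_rpow_of_exponent_ge hq0 hq1 ?_
  have hdiv : ((n / p : ℕ) : ℝ) ≤ n / p := Nat.cast_div_le
  push_cast
  calc ((n / p : ℕ) + 1 : ℝ) * (n : ℝ)⁻¹ ≤ ((n : ℝ) / p + 1) * (n : ℝ)⁻¹ := by gcongr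
    _ = 1 / p + (n : ℝ)⁻¹ := by field_simp

theorem ContinuousLinearMap.pow_map_nonneg {E : Type*} [NormedAddCommGroup E]
    [PartialOrder E] [NormedSpace ℝ E] {M : E →L[ℝ] E}
    (hpos : ∀ g, 0 ≤ g → 0 ≤ M g) (n : ℕ) : ∀ g, 0 ≤ g → 0 ≤ (M ^ n) g := by
  induction n with
  | zero => simp
  | succ n ih => exact fun g hg => by rw [pow_succ]; exact ih _ (hpos g hg)

section NormedLattice

variable {E : Type*} [NormedAddCommGroup E] [Lattice E] [HasSolidNorm E] [IsOrderedAddMonoid E]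

theorem norm_le_norm_of_nonneg_of_le {x y : E} (hx : 0 ≤ x) (hxy : x ≤ y) : ‖x‖ ≤ ‖y‖ :=
  norm_le_norm_of_abs_le_abs (by rwa [abs_of_nonneg hx, abs_of_nonneg (hx.trans hxy)])

/-- If the excess of each vector over the multiples of `h` tends to zero in norm, it does so
uniformly on compact sets. -/
theorem IsCompact.exists_norm_sub_nsmul_sup_zero_lt {K : Set E} (hK : IsCompact K) {h : E}
    (hh : 0 ≤ h) (hquasi : ∀ g : E, Tendsto (fun n : ℕ => ‖(g - n • h) ⊔ 0‖) atTop (nhds 0))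
    {ε : ℝ} (hε : 0 < ε) : ∃ n : ℕ, ∀ g ∈ K, ‖(g - n • h) ⊔ 0‖ < ε := by
  have hmono : Monotone fun n : ℕ => {g : E | ‖(g - n • h) ⊔ 0‖ < ε} := by
    intro n k hnk g hg
    refine (norm_le_norm_of_nonneg_of_le le_sup_right ?_).trans_lt hg
    gcongr
  refine hK.elim_directed_cover (fun n : ℕ => {g : E | ‖(g - n • h) ⊔ 0‖ < ε}) (fun n => ?_)
    (fun g _ => ?_) hmono.directed_le
  · exact isOpen_lt (by fun_prop) continuous_const
  · exact Set.mem_iUnion.mpr ((hquasi g).eventually_lt_const hε).exists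

variable [NormedSpace ℝ E]

theorem ContinuousLinearMap.norm_map_le_norm_map_abs {T : E →L[ℝ] E}
    (hpos : ∀ g, 0 ≤ g → 0 ≤ T g) (f : E) : ‖T f‖ ≤ ‖T |f|‖ := by
  have hT : Monotone T := fun x y hxy => by
    have := hpos (y - x) (sub_nonneg.mpr hxy)
    rwa [map_sub, sub_nonneg] at this
  refine norm_le_norm_of_nonneg_of_le (abs_nonneg (T f)) (abs_le'.mpr ⟨hT (le_abs_self f), ?_⟩)
    |>.trans' (norm_abs_eq_norm _).ge
  rw [← map_neg]
  exact hT (neg_le_abs f)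

/-- For a compact positive operator `M`, the growth of `M ^ n` is controlled by the orbit of `h`
up to an arbitrarily small multiple. -/
theorem IsCompactOperator.exists_norm_pow_succ_le {M : E →L[ℝ] E} (hM : IsCompactOperator M)
    (hpos : ∀ g, 0 ≤ g → 0 ≤ M g) {h : E} (hh : 0 ≤ h)
    (hquasi : ∀ g : E, Tendsto (fun n : ℕ => ‖(g - n • h) ⊔ 0‖) atTop (nhds 0))
    {ε : ℝ} (hε : 0 < ε) :
    ∃ C > 0, ∀ n : ℕ, ‖M ^ (n + 1)‖ ≤ C * ‖(M ^ n) h‖ + ε * ‖M ^ n‖ := by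
  obtain ⟨K, hK, hMK⟩ := IsCompactOperator.image_closedBall_subset_compact
    (f := (M : E →ₗ[ℝ] E)) hM 1
  obtain ⟨N, hN⟩ := hK.exists_norm_sub_nsmul_sup_zero_lt hh hquasi hε
  refine ⟨N + 1, by positivity, fun n => ?_⟩
  refine ContinuousLinearMap.opNorm_le_of_unit_norm (by positivity) fun f hf => ?_
  set e : E := (M |f| - N • h) ⊔ 0
  have he : ‖e‖ < ε := hN _ (hMK ⟨|f|, by simp [norm_abs_eq_norm, hf], rfl⟩)
  have hle : M |f| ≤ N • h + e := by
    rw [← sub_le_iff_le_add']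
    exact le_sup_left
  have hn := ContinuousLinearMap.pow_map_nonneg hpos n
  calc ‖(M ^ (n + 1)) f‖ ≤ ‖(M ^ (n + 1)) |f|‖ :=
        ContinuousLinearMap.norm_map_le_norm_map_abs
          (ContinuousLinearMap.pow_map_nonneg hpos (n + 1)) f
    _ = ‖(M ^ n) (M |f|)‖ := by rw [pow_succ]; rfl
    _ ≤ ‖(M ^ n) (N • h + e)‖ := by
        refine norm_le_norm_of_nonneg_of_le (hn _ (hpos _ (abs_nonneg f))) ?_
        have := hn _ (sub_nonneg.mpr hle)
        rwa [map_sub, sub_nonneg] at this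
    _ ≤ N * ‖(M ^ n) h‖ + ‖M ^ n‖ * ‖e‖ := by
        rw [map_add, map_nsmul]
        refine (norm_add_le _ _).trans (add_le_add norm_nsmul_le ((M ^ n).le_opNorm e))
    _ ≤ (N + 1) * ‖(M ^ n) h‖ + ε * ‖M ^ n‖ := by
        rw [mul_comm ε]
        gcongr
        linarith

/-- Local spectral radius formula for a compact positive operator at a quasi-interior point. -/
theorem IsCompactOperator.tendsto_norm_pow_apply_root {M : E →L[ℝ] E} (hM : IsCompactOperator M)
    (hpos : ∀ g, 0 ≤ g → 0 ≤ M g) {h : E} (hh : 0 ≤ h)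
    (hquasi : ∀ g : E, Tendsto (fun n : ℕ => ‖(g - n • h) ⊔ 0‖) atTop (nhds 0))
    {r : ℝ} (hr : Tendsto (fun n : ℕ => ‖M ^ n‖ ^ (1 / (n : ℝ))) atTop (nhds r)) :
    Tendsto (fun n : ℕ => ‖(M ^ n) h‖ ^ (1 / (n : ℝ))) atTop (nhds r) := by
  have hr0 : 0 ≤ r := ge_of_tendsto' hr fun n => by positivity
  refine tendsto_order.mpr ⟨fun s hs => ?_, fun s hs => ?_⟩
  · rcases hr0.eq_or_lt with rfl | hr0
    · exact Eventually.of_forall fun n => hs.trans_le (by positivity)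
    have hlow : ∀ n : ℕ, n ≠ 0 → r ^ n ≤ ‖M ^ n‖ := fun n hn =>
      pow_le_of_submultiplicative_of_tendsto_root (a := fun n => ‖M ^ n‖)
        (fun n => norm_nonneg _) hr0.le
        (fun n k hk => by
          rw [pow_mul]
          exact norm_pow_le' _ (Nat.pos_of_ne_zero hk)) hr hn
    have hrm : r ≤ ‖M‖ := by simpa using hlow 1 one_ne_zero
    refine eventually_lt_root_of_le_add_mul hr0 (hr0.trans_le hrm) hrm hlow (fun n => ?_)
      (fun ε hε => hM.exists_norm_pow_succ_le hpos hh hquasi hε) hr hs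
    rw [pow_succ']
    exact M.le_opNorm _
  · have hlim : Tendsto (fun n : ℕ => ‖M ^ n‖ ^ (1 / (n : ℝ)) * (‖h‖ + 1) ^ (1 / (n : ℝ)))
        atTop (nhds r) := by
      have := (tendsto_const_nhds (x := ‖h‖ + 1)).rpow
        (tendsto_one_div_atTop_nhds_zero_nat (𝕜 := ℝ)) (Or.inl (by positivity))
      simpa using hr.mul this
    filter_upwards [hlim.eventually_lt_const hs] with n hn
    refine lt_of_le_of_lt ?_ hn
    rw [← Real.mul_rpow (by positivity) (by positivity)]
    refine Real.rpow_le_rpow (by positivity) ?_ (by positivity)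
    exact ((M ^ n).le_opNorm h).trans (by gcongr; linarith)

end NormedLattice

/-- An almost everywhere positive function is a quasi-interior point of the cone of `L¹`. -/
theorem MeasureTheory.Lp.tendsto_norm_sub_nsmul_sup_zero {Ω : Type*} [MeasurableSpace Ω]
    {μ : Measure Ω} {h : Lp ℝ 1 μ} (hh : ∀ᵐ ω ∂μ, 0 < h ω) (g : Lp ℝ 1 μ) :
    Tendsto (fun n : ℕ => ‖(g - n • h) ⊔ 0‖) atTop (nhds 0) := by
  have hcoe : ∀ᵐ ω ∂μ, ∀ n : ℕ, ((g - n • h) ⊔ 0 : Lp ℝ 1 μ) ω = max (g ω - n * h ω) 0 := by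
    refine ae_all_iff.mpr fun n => ?_
    rw [← Nat.cast_smul_eq_nsmul ℝ n h]
    filter_upwards [Lp.coeFn_sup (g - (n : ℝ) • h) 0, Lp.coeFn_sub g ((n : ℝ) • h),
      Lp.coeFn_smul (n : ℝ) h, Lp.coeFn_zero ℝ 1 μ] with ω h1 h2 h3 h4
    rw [h1, Pi.sup_apply, h2, Pi.sub_apply, h3, h4]
    simp
  simp_rw [L1.norm_eq_integral_norm]
  rw [← integral_zero Ω ℝ (μ := μ)]
  refine tendsto_integral_of_dominated_convergence (fun ω => ‖g ω‖)
    (fun n => (Lp.aestronglyMeasurable _).norm) (L1.integrable_coeFn g).norm (fun n => ?_) ?_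
  · filter_upwards [hcoe, hh] with ω hω hpos
    have : 0 ≤ n * h ω := by positivity
    rw [hω, norm_norm, Real.norm_of_nonneg (le_max_right _ _)]
    exact max_le ((by linarith : g ω - n * h ω ≤ g ω).trans (le_abs_self _)) (norm_nonneg _)
  · filter_upwards [hcoe, hh] with ω hω hpos
    refine tendsto_const_nhds.congr' ?_
    filter_upwards [(tendsto_natCast_atTop_atTop.atTop_mul_const hpos).eventually_ge_atTop (g ω)]
      with n hn
    rw [hω, max_eq_right (by linarith), _root_.norm_zero]

/-- Local spectral radius theorem: for a compact positive linear operator `M` on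
`L¹(π)` and `h ∈ L¹(π)` with `h > 0` a.e., `‖Mⁿh‖^{1/n} → r(M)`, where
`r(M) = lim ‖Mⁿ‖^{1/n}` is the spectral radius. -/
theorem stmt_15 {Ω : Type*} [MeasurableSpace Ω] (π : Measure Ω) [IsProbabilityMeasure π]
    (M : Lp ℝ 1 π →L[ℝ] Lp ℝ 1 π)
    (hcompact : IsCompactOperator M)
    (hpos : ∀ g : Lp ℝ 1 π, 0 ≤ g → 0 ≤ M g)
    (h : Lp ℝ 1 π) (hh : ∀ᵐ ω ∂π, 0 < h ω)
    (r : ℝ) (hr : Tendsto (fun n : ℕ => ‖M ^ n‖ ^ (1 / (n : ℝ))) atTop (nhds r)) :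
    Tendsto (fun n : ℕ => ‖(M ^ n) h‖ ^ (1 / (n : ℝ))) atTop (nhds r) :=
  hcompact.tendsto_norm_pow_apply_root hpos
    ((Lp.coeFn_nonneg h).mp (hh.mono fun _ hω => hω.le))
    (Lp.tendsto_norm_sub_nsmul_sup_zero hh) hr
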